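/- Let ∅ ≠ L ⊆ M ⊊ N ⊆ V. Then λ_Z^N(x_Z) = 0 for every Z ⊆ N with L ⊊ Z and Z ∩ (N∖M) ≠ ∅ and every x_Z ∈ 𝔛_Z, if and only if Σ_{Z ⊆ N : L ⊊ Z, Z ∩ (N∖M) ≠ ∅} λ_Z^N(x_Z) = 0 for every x_N ∈ 𝔛_N (where x_Z denotes the restriction of x_N to Z). -/

import Mathlib

open Finset

variable {V : Type*} [Fintype V] [DecidableEq V]
variable {𝔛 : V → Type*} [∀ v, Fintype (𝔛 v)] [∀ v, DecidableEq (𝔛 v)]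
  [∀ v, Nonempty (𝔛 v)]

/-- The marginal `p_A` of a distribution `p` on the full table, evaluated at the
`A`-coordinates of `x`. -/
noncomputable def margin (p : (∀ v, 𝔛 v) → ℝ) (A : Finset V) (x : ∀ v, 𝔛 v) : ℝ :=
  ∑ y ∈ Finset.univ.filter (fun y : ∀ v, 𝔛 v => ∀ v ∈ A, y v = x v), p y

/-- `ν_L^M(x_L) = (1/|𝔛_{M∖L}|) Σ_{j ∈ 𝔛_M : j_L = x_L} log p_M(j)`, written with sums over
full configurations (for `L ⊆ M` the extra coordinates cancel against the normalization). -/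
noncomputable def nu (p : (∀ v, 𝔛 v) → ℝ) (L M : Finset V) (x : ∀ v, 𝔛 v) : ℝ :=
  (∏ v ∈ Lᶜ, (Fintype.card (𝔛 v) : ℝ))⁻¹ *
    ∑ j ∈ Finset.univ.filter (fun j : ∀ v, 𝔛 v => ∀ v ∈ L, j v = x v),
      Real.log (margin p M j)

/-- The marginal log-linear parameter `λ_L^M(x_L) = Σ_{L' ⊆ L} (−1)^{|L∖L'|} ν_{L'}^M(x_{L'})`. -/
noncomputable def mll (p : (∀ v, 𝔛 v) → ℝ) (L M : Finset V) (x : ∀ v, 𝔛 v) : ℝ :=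
  ∑ L' ∈ L.powerset, (-1 : ℝ) ^ ((L \ L').card) * nu p L' M x

/-!
The term `ν_B^N` is the average `E_B f` of `f = log p_N` over the coordinates outside `B`, so
`λ_Z^N` is the component of `f` indexed by `Z` in its ANOVA decomposition. Since
`E_A E_B = E_{A ∩ B}`, the operator `E_A` fixes the components with `Z ⊆ A` and, as pairing the
subsets of `Z` that differ in one point outside `A` shows, kills the others. Applying `E_A` to a
vanishing sum of components therefore isolates the one indexed by `A`, once those indexed by its
proper subsets are known to vanish.
-/

open scoped BigOperators

section CondMean

variable {ι : Type*} [Fintype ι] [DecidableEq ι] {α : ι → Type*} [∀ i, Fintype (α i)]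
  {F : Type*} [AddCommMonoid F] [Module ℚ≥0 F]

/-- The averaging operator `E_A` over the coordinates outside `A`: the conditional expectation of
`f` given the `A`-coordinates, under the uniform distribution on the table. Averaging over all
coordinates of `y` and then overwriting those in `A` avoids sums over partial configurations. -/
def condMean (A : Finset ι) : ((∀ i, α i) → F) →+ ((∀ i, α i) → F) where
  toFun f x := 𝔼 y, f (A.piecewise x y)
  map_zero' := by ext x; simp
  map_add' f g := by ext x; simp [expect_add_distrib]

theorem expect_expect_piecewise [∀ i, Nonempty (α i)] (B : Finset ι) (f : (∀ i, α i) → F) :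
    𝔼 y, 𝔼 z, f (B.piecewise y z) = 𝔼 y, f y := by
  let swap : (∀ i, α i) × (∀ i, α i) → (∀ i, α i) × (∀ i, α i) :=
    fun q => (B.piecewise q.1 q.2, B.piecewise q.2 q.1)
  have swap_involutive : Function.Involutive swap := by
    rintro ⟨y, z⟩
    ext i <;> by_cases hi : i ∈ B <;> simp [swap, hi]
  calc 𝔼 y, 𝔼 z, f (B.piecewise y z)
      = 𝔼 q : (∀ i, α i) × (∀ i, α i), f (swap q).1 := by
        rw [← univ_product_univ, expect_product]
    _ = 𝔼 q : (∀ i, α i) × (∀ i, α i), f q.1 :=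
        Fintype.expect_bijective swap swap_involutive.bijective _ _ fun _ => rfl
    _ = 𝔼 y, f y := by
      simp only [← univ_product_univ, expect_product, Fintype.expect_const]

theorem condMean_condMean [∀ i, Nonempty (α i)] (A B : Finset ι) (f : (∀ i, α i) → F) :
    condMean A (condMean B f) = condMean (A ∩ B) f := by
  have piecewise_piecewise (x y z : ∀ i, α i) :
      B.piecewise (A.piecewise x y) z = (A ∩ B).piecewise x (B.piecewise y z) := by
    ext i
    by_cases hA : i ∈ A <;> by_cases hB : i ∈ B <;> simp [hA, hB]
  ext x
  change 𝔼 y, 𝔼 z, f (B.piecewise (A.piecewise x y) z) = 𝔼 y, f ((A ∩ B).piecewise x y)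
  simp only [piecewise_piecewise]
  exact expect_expect_piecewise B fun y => f ((A ∩ B).piecewise x y)

theorem condMean_apply_eq_expect_filter [∀ i, DecidableEq (α i)] (A : Finset ι)
    (f : (∀ i, α i) → F) (x : ∀ i, α i) :
    condMean A f x = 𝔼 j with ∀ i ∈ A, j i = x i, f j := by
  let J : Finset (∀ i, α i) := {j | ∀ i ∈ A, j i = x i}
  let K : Finset (∀ i, α i) := {k | ∀ i ∉ A, k i = x i}
  have hK : K.Nonempty := ⟨x, by simp [K]⟩
  -- Overwriting `y` by `x` inside, respectively outside, `A` identifies the table with `J ×ˢ K`.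
  calc condMean A f x
      = 𝔼 q ∈ J ×ˢ K, f q.1 := by
        refine expect_nbij' (fun y => (A.piecewise x y, A.piecewise y x))
          (fun q => A.piecewise q.2 q.1) ?_ ?_ ?_ ?_ ?_
        · simp +contextual [J, K]
        · simp
        · simp [piecewise_same]
        · rintro ⟨j, k⟩ hjk
          simp only [J, K, mem_product, mem_filter_univ] at hjk
          ext i <;> by_cases hi : i ∈ A <;> simp [hi, hjk.1, hjk.2]
        · simp
    _ = 𝔼 j ∈ J, f j := by simp only [expect_product, expect_const hK]

end CondMean

section Interaction

variable {ι : Type*} [Fintype ι] [DecidableEq ι] {α : ι → Type*} [∀ i, Fintype (α i)]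
  {F : Type*} [AddCommGroup F] [Module ℚ≥0 F]

/-- The component of `f` indexed by `Z` in its ANOVA (Hoeffding) decomposition, i.e. the Möbius
inversion of `B ↦ E_B f` over the subsets of `Z`. For `f = log p_N` it is the marginal log-linear
parameter `λ_Z^N`; integer signs allow values in any group that admits averages. -/
def interaction (Z : Finset ι) (f : (∀ i, α i) → F) : (∀ i, α i) → F :=
  ∑ B ∈ Z.powerset, (-1 : ℤ) ^ #(Z \ B) • condMean B f

variable [∀ i, Nonempty (α i)]

theorem condMean_interaction (A Z : Finset ι) (f : (∀ i, α i) → F) :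
    condMean A (interaction Z f) =
      ∑ B ∈ Z.powerset, (-1 : ℤ) ^ #(Z \ B) • condMean (A ∩ B) f := by
  simp only [interaction, map_sum, map_zsmul, condMean_condMean]

theorem condMean_interaction_of_subset {A Z : Finset ι} (h : Z ⊆ A) (f : (∀ i, α i) → F) :
    condMean A (interaction Z f) = interaction Z f := by
  rw [condMean_interaction, interaction]
  refine sum_congr rfl fun B hB => ?_
  rw [inter_eq_right.2 ((mem_powerset.1 hB).trans h)]

theorem condMean_interaction_of_not_subset {A Z : Finset ι} (h : ¬Z ⊆ A)
    (f : (∀ i, α i) → F) : condMean A (interaction Z f) = 0 := by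
  obtain ⟨i, hiZ, hiA⟩ := not_subset.1 h
  rw [condMean_interaction, ← insert_erase hiZ, sum_powerset_insert (notMem_erase i Z),
    ← sum_add_distrib]
  -- The subsets `B` and `insert i B` meet `A` in the same set and carry opposite signs.
  refine sum_eq_zero fun B hB => ?_
  have hiB : i ∉ B := fun hi => notMem_erase i Z (mem_powerset.1 hB hi)
  have inter_insert : A ∩ insert i B = A ∩ B := inter_insert_of_notMem hiA
  have card_sdiff_eq :
      #(insert i (Z.erase i) \ B) = #(insert i (Z.erase i) \ insert i B) + 1 := by
    rw [insert_sdiff_insert, sdiff_insert_of_notMem (notMem_erase i Z),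
      insert_sdiff_of_notMem _ hiB, card_insert_of_notMem (by simp)]
  rw [inter_insert, card_sdiff_eq, pow_succ, mul_neg_one, neg_smul, neg_add_cancel]

theorem stmt8_general (s : Finset (Finset ι)) (f : Finset ι → (∀ i, α i) → F) :
    (∀ Z ∈ s, interaction Z (f Z) = 0) ↔ ∑ Z ∈ s, interaction Z (f Z) = 0 := by
  refine ⟨sum_eq_zero, fun hsum A => ?_⟩
  induction A using Finset.strongInduction with
  | H A ih =>
    intro hA
    have hmean : ∑ Z ∈ s, condMean A (interaction Z (f Z)) = 0 := by
      rw [← map_sum, hsum, map_zero]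
    have hother : ∀ Z ∈ s, Z ≠ A → condMean A (interaction Z (f Z)) = 0 := by
      intro Z hZ hne
      by_cases hZA : Z ⊆ A
      · rw [ih Z (hZA.ssubset_of_ne hne) hZ, map_zero]
      · exact condMean_interaction_of_not_subset hZA (f Z)
    rwa [sum_eq_single_of_mem A hA hother, condMean_interaction_of_subset Subset.rfl] at hmean

end Interaction

section LogLinear

variable {ι : Type*} [Fintype ι] [DecidableEq ι] {α : ι → Type*} [∀ i, Fintype (α i)]
  [∀ i, DecidableEq (α i)]

theorem card_filter_forall_mem_eq (A : Finset ι) (x : ∀ i, α i) :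
    #{j : ∀ i, α i | ∀ i ∈ A, j i = x i} = ∏ i ∈ Aᶜ, Fintype.card (α i) := by
  have filter_eq_piFinset : ({j : ∀ i, α i | ∀ i ∈ A, j i = x i} : Finset _) =
      Fintype.piFinset fun i => if i ∈ A then {x i} else univ := by
    ext j
    simp only [mem_filter_univ, Fintype.mem_piFinset]
    refine forall_congr' fun i => ?_
    by_cases hi : i ∈ A <;> simp [hi]
  rw [filter_eq_piFinset, Fintype.card_piFinset, ← prod_mul_prod_compl A]
  have hin : ∏ i ∈ A, #(if i ∈ A then {x i} else univ) = 1 :=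
    prod_eq_one fun i hi => by simp [hi]
  rw [hin, one_mul]
  exact prod_congr rfl fun i hi => by simp [mem_compl.1 hi]

theorem nu_eq_condMean (p : (∀ i, α i) → ℝ) (L M : Finset ι) :
    nu p L M = condMean L fun j => Real.log (margin p M j) := by
  ext x
  rw [condMean_apply_eq_expect_filter, expect_eq_sum_div_card, card_filter_forall_mem_eq,
    Nat.cast_prod, div_eq_inv_mul, nu]

theorem mll_eq_interaction (p : (∀ i, α i) → ℝ) (L M : Finset ι) :
    mll p L M = interaction L fun j => Real.log (margin p M j) := by
  ext x
  simp [mll, interaction, nu_eq_condMean]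

end LogLinear

theorem stmt8 (p : (∀ v, 𝔛 v) → ℝ) (hp : ∀ x, 0 < p x) (hsum : ∑ x, p x = 1)
    (L M N : Finset V) (hL : L.Nonempty) (hLM : L ⊆ M) (hMN : M ⊂ N) :
    (∀ Z ⊆ N, L ⊂ Z → (Z ∩ (N \ M)).Nonempty → ∀ x : ∀ v, 𝔛 v, mll p Z N x = 0) ↔
    (∀ x : ∀ v, 𝔛 v,
      ∑ Z ∈ N.powerset.filter (fun Z => L ⊂ Z ∧ (Z ∩ (N \ M)).Nonempty),
        mll p Z N x = 0) := by
  simpa [mll_eq_interaction, funext_iff] using stmt8_general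
    {Z ∈ N.powerset | L ⊂ Z ∧ (Z ∩ (N \ M)).Nonempty} fun _ j => Real.log (margin p N j)
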